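/- For all integers n ≥ k ≥ 1 and every real α, d_k(α)·d_n(α) − d_{k−1}(α)·d_{n+1}(α) = α^{2k}·d_{n−k}(α). -/

import Mathlib

/-- `dpoly n α = ∑_{m=0}^{⌊n/2⌋} (-1)^m C(n-m, m) α^(2m)`. -/
noncomputable def dpoly (n : ℕ) (α : ℝ) : ℝ :=
  ∑ m ∈ Finset.range (n / 2 + 1), (-1 : ℝ) ^ m * (Nat.choose (n - m) m : ℝ) * α ^ (2 * m)

theorem dpoly_ext (n N : ℕ) (α : ℝ) (h : n / 2 + 1 ≤ N) :
    dpoly n α = ∑ m ∈ Finset.range N, (-1 : ℝ) ^ m * (Nat.choose (n - m) m : ℝ) * α ^ (2 * m) := by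
  unfold dpoly
  apply Finset.sum_subset
  · intro x hx
    simp only [Finset.mem_range] at *
    omega
  · intro x _ hx
    simp only [Finset.mem_range] at hx
    rw [Nat.choose_eq_zero_of_lt (by omega)]
    simp

theorem dpoly_rec (n : ℕ) (α : ℝ) :
    dpoly (n + 2) α = dpoly (n + 1) α - α ^ 2 * dpoly n α := by
  rw [dpoly_ext (n + 2) (n + 2 + 1) α (by omega), dpoly_ext (n + 1) (n + 2 + 1) α (by omega),
    dpoly_ext n (n + 2) α (by omega), Finset.sum_range_succ', Finset.sum_range_succ' _ (n + 2),
    Finset.mul_sum, add_sub_right_comm, ← Finset.sum_sub_distrib]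
  congr 1
  · apply Finset.sum_congr rfl
    intro m hm
    have hc : (n + 2 - (m + 1)).choose (m + 1)
        = (n - m).choose m + (n + 1 - (m + 1)).choose (m + 1) := by
      rw [Finset.mem_range] at hm
      by_cases h : m ≤ n
      · rw [show n + 2 - (m + 1) = (n - m) + 1 by omega, show n + 1 - (m + 1) = n - m by omega,
          Nat.choose_succ_succ]
      · rw [Nat.choose_eq_zero_of_lt (by omega), Nat.choose_eq_zero_of_lt (by omega),
          Nat.choose_eq_zero_of_lt (by omega)]
    rw [hc]
    push_cast
    ring

theorem dpoly_aux (k j : ℕ) (α : ℝ) :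
    dpoly (k + 1) α * dpoly (k + 1 + j) α - dpoly k α * dpoly (k + j + 2) α
      = α ^ (2 * (k + 1)) * dpoly j α := by
  induction k with
  | zero =>
    have h0 : dpoly 0 α = 1 := by simp [dpoly]
    have h1 : dpoly 1 α = 1 := by simp [dpoly]
    have h := dpoly_rec j α
    simp only [zero_add, h0, h1, h, add_comm 1 j]
    ring
  | succ k ih =>
    rw [show k + 1 + 1 + j = k + j + 2 by ring, show k + 1 + j + 2 = (k + j + 1) + 2 by ring,
      show k + 1 + 1 = k + 2 by ring, dpoly_rec k, dpoly_rec (k + j + 1)]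
    rw [show k + 1 + j = k + j + 1 by ring] at ih
    rw [show k + j + 1 + 1 = k + j + 2 by ring]
    linear_combination α ^ 2 * ih

theorem stmt6 (n k : ℕ) (hk : 1 ≤ k) (hkn : k ≤ n) (α : ℝ) :
    dpoly k α * dpoly n α - dpoly (k - 1) α * dpoly (n + 1) α = α ^ (2 * k) * dpoly (n - k) α := by
  obtain ⟨k, rfl⟩ := Nat.exists_eq_add_of_le' hk
  obtain ⟨j, rfl⟩ := Nat.exists_eq_add_of_le hkn
  have h := dpoly_aux k j α
  rw [show k + 1 + j + 1 = k + j + 2 by ring, Nat.add_sub_cancel, Nat.add_sub_cancel_left]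
  exact h
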